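/- Let ℓ and m be odd positive integers, R = F₂[x, y]/(xˡ − 1, yᵐ − 1), and let c, d ∈ R be arbitrary. Then: (1) H is the internal direct sum of H_h and H_v; (2) the ideals ann(c) and ann(d) are principal, say ann(c) = (P) and ann(d) = (Q); and (3) the map R/(c, d) ⊕ R/(c, d) → H sending ([f], [g]) to [f·P, g·Q] is a well-defined R-module isomorphism. -/

import Mathlib

open Submodule

section Core
variable (R : Type*) [CommRing R]

/-- The annihilator ideal of an element `c`: `{r : R | c * r = 0}`. -/
def annI (c : R) : Ideal R := LinearMap.ker (LinearMap.lsmul R R c)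

lemma mem_annI {R : Type*} [CommRing R] {c r : R} : r ∈ annI R c ↔ c * r = 0 := Iff.rfl

/-- `Z = {(f, g) | c * f = d * g}`. -/
def Zsub (c d : R) : Submodule R (R × R) where
  carrier := {p | c * p.1 = d * p.2}
  add_mem' := by
    rintro ⟨a1, a2⟩ ⟨b1, b2⟩ ha hb
    simp only [Set.mem_setOf_eq] at *
    simp [mul_add, ha, hb]
  zero_mem' := by simp
  smul_mem' := by
    rintro r ⟨p1, p2⟩ hp
    simp only [Set.mem_setOf_eq, Prod.smul_fst, Prod.smul_snd, smul_eq_mul] at *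
    rw [mul_left_comm, hp, mul_left_comm]

lemma mem_Zsub {R : Type*} [CommRing R] {c d f g : R} :
    (f, g) ∈ Zsub R c d ↔ c * f = d * g := Iff.rfl

/-- `B = {(d * r, c * r) | r ∈ R}`. -/
def Bsub (c d : R) : Submodule R (R × R) :=
  LinearMap.range ((LinearMap.lsmul R R d).prod (LinearMap.lsmul R R c))

/-- The homology `H = Z / B`. -/
abbrev Hmod (c d : R) := Zsub R c d ⧸ (Bsub R c d).comap (Zsub R c d).subtype

/-- The class `[f, g] ∈ H` of a pair `(f, g)` with `c * f = d * g`. -/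
def Hmk (c d : R) (f g : R) (h : c * f = d * g) : Hmod R c d :=
  Submodule.Quotient.mk ⟨(f, g), h⟩

/-- The submodule of `H` generated by horizontally pure classes `[f, 0]`. -/
def Hpureh (c d : R) : Submodule R (Hmod R c d) :=
  span R {h | ∃ f, ∃ hf : c * f = d * 0, h = Hmk R c d f 0 hf}

/-- The submodule of `H` generated by vertically pure classes `[0, g]`. -/
def Hpurev (c d : R) : Submodule R (Hmod R c d) :=
  span R {h | ∃ g, ∃ hg : c * 0 = d * g, h = Hmk R c d 0 g hg}

/-- The ideal `M = {r ∈ ann(cd) | ∃ f ∈ ann(c), g ∈ ann(d), rd = fd ∧ rc = gc}`. -/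
def Msub (c d : R) : Ideal R where
  carrier := {r | r ∈ annI R (c * d) ∧
    ∃ f ∈ annI R c, ∃ g ∈ annI R d, r * d = f * d ∧ r * c = g * c}
  zero_mem' := ⟨zero_mem _, 0, zero_mem _, 0, zero_mem _, by simp, by simp⟩
  add_mem' := by
    rintro a b ⟨ha, f, hf, g, hg, hfd, hgc⟩ ⟨hb, f', hf', g', hg', hfd', hgc'⟩
    exact ⟨add_mem ha hb, f + f', add_mem hf hf', g + g', add_mem hg hg',
      by rw [add_mul, add_mul, hfd, hfd'], by rw [add_mul, add_mul, hgc, hgc']⟩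
  smul_mem' := by
    rintro s a ⟨ha, f, hf, g, hg, hfd, hgc⟩
    refine ⟨Submodule.smul_mem _ s ha, s * f, ?_, s * g, ?_, ?_, ?_⟩
    · simpa [smul_eq_mul] using Submodule.smul_mem _ s hf
    · simpa [smul_eq_mul] using Submodule.smul_mem _ s hg
    · show (s * a) * d = (s * f) * d
      rw [mul_assoc, hfd, mul_assoc]
    · show (s * a) * c = (s * g) * c
      rw [mul_assoc, hgc, mul_assoc]

lemma mem_Msub {R : Type*} [CommRing R] {c d r : R} :
    r ∈ Msub R c d ↔ r ∈ annI R (c * d) ∧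
      ∃ f ∈ annI R c, ∃ g ∈ annI R d, r * d = f * d ∧ r * c = g * c := Iff.rfl

end Core

section Helpers
variable {R : Type*} [CommRing R]

lemma dr_mem_annI {c d r : R} (hr : r ∈ annI R (c * d)) : d * r ∈ annI R c := by
  rw [mem_annI] at *
  rw [← mul_assoc]; exact hr

lemma cr_mem_annI {c d r : R} (hr : r ∈ annI R (c * d)) : c * r ∈ annI R d := by
  rw [mem_annI] at *
  calc d * (c * r) = c * d * r := by ring
  _ = 0 := hr

lemma ann_pair_Z {c d f g : R} (hf : f ∈ annI R c) (hg : g ∈ annI R d) :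
    c * f = d * g := by
  rw [mem_annI] at hf hg; rw [hf, hg]

lemma cf_mem_inf {c d f g : R} (h : c * f = d * g) :
    c * f ∈ Ideal.span {c} ⊓ Ideal.span {d} := by
  refine Submodule.mem_inf.mpr ⟨?_, ?_⟩
  · exact Ideal.mem_span_singleton.mpr ⟨f, rfl⟩
  · exact Ideal.mem_span_singleton.mpr ⟨g, h⟩

lemma rc_mem_inf_ann {c d r : R} (hr : r ∈ annI R (c * d)) :
    r * c ∈ Ideal.span {c} ⊓ annI R d := by
  rw [mem_annI] at hr
  refine Submodule.mem_inf.mpr ⟨Ideal.mem_span_singleton.mpr ⟨r, mul_comm r c⟩, ?_⟩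
  rw [mem_annI]
  calc d * (r * c) = c * d * r := by ring
  _ = 0 := hr

lemma rd_mem_ann_inf {c d r : R} (hr : r ∈ annI R (c * d)) :
    r * d ∈ annI R c ⊓ Ideal.span {d} := by
  rw [mem_annI] at hr
  refine Submodule.mem_inf.mpr ⟨?_, Ideal.mem_span_singleton.mpr ⟨r, mul_comm r d⟩⟩
  rw [mem_annI]
  calc c * (r * d) = c * d * r := by ring
  _ = 0 := hr

lemma HmkPQ {c d P Q : R} (hP : annI R c = Ideal.span {P}) (hQ : annI R d = Ideal.span {Q})
    (f g : R) : c * (f * P) = d * (g * Q) := by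
  have hp : c * P = 0 := by
    rw [← mem_annI (R := R)]
    rw [hP]
    exact Ideal.mem_span_singleton_self P
  have hq : d * Q = 0 := by
    rw [← mem_annI (R := R)]
    rw [hQ]
    exact Ideal.mem_span_singleton_self Q
  calc c * (f * P) = f * (c * P) := by ring
  _ = 0 := by rw [hp, mul_zero]
  _ = g * (d * Q) := by rw [hq, mul_zero]
  _ = d * (g * Q) := by ring

end Helpers

section QuotTypes
variable (R : Type*) [CommRing R]

/-- `ann(cd)/M`. -/
abbrev Tcd (c d : R) :=
  ↥(annI R (c * d)) ⧸ Submodule.comap (annI R (c * d)).subtype (Msub R c d)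

/-- `ann(c)/(ann(c)·(d))`. -/
abbrev Th (c d : R) :=
  ↥(annI R c) ⧸ Submodule.comap (annI R c).subtype (annI R c * Ideal.span {d})

/-- `ann(d)/((c)·ann(d))`. -/
abbrev Tv (c d : R) :=
  ↥(annI R d) ⧸ Submodule.comap (annI R d).subtype (Ideal.span {c} * annI R d)

/-- `((c) ∩ (d))/(cd)`. -/
abbrev T4 (c d : R) :=
  ↥(Ideal.span {c} ⊓ Ideal.span {d}) ⧸
    Submodule.comap (Ideal.span {c} ⊓ Ideal.span {d}).subtype (Ideal.span {c * d})

/-- `((c) ∩ ann(d))/((c)·ann(d))`. -/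
abbrev Tc' (c d : R) :=
  ↥(Ideal.span {c} ⊓ annI R d) ⧸
    Submodule.comap (Ideal.span {c} ⊓ annI R d).subtype (Ideal.span {c} * annI R d)

/-- `(ann(c) ∩ (d))/(ann(c)·(d))`. -/
abbrev Td' (c d : R) :=
  ↥(annI R c ⊓ Ideal.span {d}) ⧸
    Submodule.comap (annI R c ⊓ Ideal.span {d}).subtype (annI R c * Ideal.span {d})

/-- `φ : Z → R`, `(f, g) ↦ c·f`. -/
def phiZ (c d : R) : Zsub R c d →ₗ[R] R :=
  LinearMap.lsmul R R c ∘ₗ (LinearMap.fst R R R ∘ₗ (Zsub R c d).subtype)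

end QuotTypes


/-- The ring `F₂[x, y]/(xˡ − 1, yᵐ − 1)` underlying bivariate bicycle codes. -/
abbrev BBRing (l m : ℕ) : Type :=
  MvPolynomial (Fin 2) (ZMod 2) ⧸
    Ideal.span {(MvPolynomial.X 0 : MvPolynomial (Fin 2) (ZMod 2)) ^ l - 1,
      (MvPolynomial.X 1 : MvPolynomial (Fin 2) (ZMod 2)) ^ m - 1}

section Homology
variable {R : Type*} [CommRing R] {c d c' d' : R}

lemma Hmk_eq_Hmk_iff {f g f₁ g₁ : R} (h : c * f = d * g) (h₁ : c * f₁ = d * g₁) :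
    Hmk R c d f g h = Hmk R c d f₁ g₁ h₁ ↔ ∃ r, d * r = f - f₁ ∧ c * r = g - g₁ := by
  unfold Hmk
  rw [Submodule.Quotient.eq]
  simp [Bsub]

lemma Hmk_eq_zero_iff {f g : R} (h : c * f = d * g) :
    Hmk R c d f g h = 0 ↔ ∃ r, d * r = f ∧ c * r = g := by
  unfold Hmk
  rw [Submodule.Quotient.mk_eq_zero]
  simp [Bsub]

lemma mem_Hpureh {h : Hmod R c d} :
    h ∈ Hpureh R c d ↔ ∃ f, ∃ hf : c * f = d * 0, h = Hmk R c d f 0 hf := by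
  refine ⟨fun hh => ?_, fun hh => subset_span hh⟩
  induction hh using span_induction with
  | mem x hx => exact hx
  | zero => exact ⟨0, by simp, ((Hmk_eq_zero_iff _).2 ⟨0, by simp⟩).symm⟩
  | add x y _ _ hx hy =>
    obtain ⟨f, hf, rfl⟩ := hx
    obtain ⟨g, hg, rfl⟩ := hy
    refine ⟨f + g, by rw [mul_add, hf, hg]; simp, ?_⟩
    unfold Hmk
    rw [← Submodule.Quotient.mk_add]
    congr 1
    ext <;> simp
  | smul a x _ hx =>
    obtain ⟨f, hf, rfl⟩ := hx
    refine ⟨a * f, by rw [mul_left_comm, hf]; simp, ?_⟩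
    unfold Hmk
    rw [← Submodule.Quotient.mk_smul]
    congr 1
    ext <;> simp

lemma mem_Hpurev {h : Hmod R c d} :
    h ∈ Hpurev R c d ↔ ∃ g, ∃ hg : c * 0 = d * g, h = Hmk R c d 0 g hg := by
  refine ⟨fun hh => ?_, fun hh => subset_span hh⟩
  induction hh using span_induction with
  | mem x hx => exact hx
  | zero => exact ⟨0, by simp, ((Hmk_eq_zero_iff _).2 ⟨0, by simp⟩).symm⟩
  | add x y _ _ hx hy =>
    obtain ⟨f, hf, rfl⟩ := hx
    obtain ⟨g, hg, rfl⟩ := hy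
    refine ⟨f + g, by rw [mul_add, ← hf, ← hg]; simp, ?_⟩
    unfold Hmk
    rw [← Submodule.Quotient.mk_add]
    congr 1
    ext <;> simp
  | smul a x _ hx =>
    obtain ⟨f, hf, rfl⟩ := hx
    refine ⟨a * f, by rw [mul_left_comm, ← hf]; simp, ?_⟩
    unfold Hmk
    rw [← Submodule.Quotient.mk_smul]
    congr 1
    ext <;> simp

lemma annI_eq_span_of_regular (hc : c * c' * c = c) :
    annI R c = Ideal.span {1 - c * c'} := by
  ext r
  rw [mem_annI, Ideal.mem_span_singleton]
  constructor
  · intro h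
    exact ⟨r, by linear_combination c' * h⟩
  · rintro ⟨s, rfl⟩
    linear_combination (-s) * hc

/-- Over a von Neumann regular pair, every cycle is homologous to one in `ann(c) × ann(d)`. -/
lemma exists_boundary_of_regular (hc : c * c' * c = c) (hd : d * d' * d = d) {f g : R}
    (h : c * f = d * g) : ∃ r, c * (f - d * r) = 0 ∧ d * (g - c * r) = 0 := by
  have key : c * d * (c' * d' * c * f) = c * f := by
    linear_combination (d * d' * f) * hc + d * d' * h + g * hd - h
  exact ⟨c' * d' * c * f, by linear_combination -key, by linear_combination -key - h⟩

lemma Hpureh_sup_Hpurev_of_regular (hc : c * c' * c = c) (hd : d * d' * d = d) :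
    Hpureh R c d ⊔ Hpurev R c d = ⊤ := by
  refine eq_top_iff.2 fun x _ => ?_
  obtain ⟨⟨⟨f, g⟩, h⟩, rfl⟩ := Submodule.Quotient.mk_surjective _ x
  obtain ⟨r, hf, hg⟩ := exists_boundary_of_regular hc hd (mem_Zsub.1 h)
  refine Submodule.mem_sup.2 ⟨_, mem_Hpureh.2 ⟨f - d * r, by simpa using hf, rfl⟩,
    _, mem_Hpurev.2 ⟨g - c * r, by simpa using hg.symm, rfl⟩, ?_⟩
  unfold Hmk
  rw [← Submodule.Quotient.mk_add, Submodule.Quotient.eq]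
  exact ⟨-r, by ext <;> simp⟩

lemma Hpureh_inf_Hpurev_of_regular (hc : c * c' * c = c) :
    Hpureh R c d ⊓ Hpurev R c d = ⊥ := by
  refine eq_bot_iff.2 fun x hx => ?_
  obtain ⟨f, hf, rfl⟩ := mem_Hpureh.1 hx.1
  obtain ⟨g, hg, hfg⟩ := mem_Hpurev.1 hx.2
  obtain ⟨r, hr, -⟩ := (Hmk_eq_Hmk_iff _ _).1 hfg
  refine (Submodule.mem_bot R).2 ((Hmk_eq_zero_iff _).2 ⟨(1 - c * c') * r, ?_, ?_⟩)
  · linear_combination (1 - c * c') * hr - c' * hf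
  · linear_combination (-r) * hc

/-- The map `(f, g) ↦ [f * P, g * Q]` on `R × R`. -/
def annGenMap {P Q : R} (hP : annI R c = Ideal.span {P}) (hQ : annI R d = Ideal.span {Q}) :
    R × R →ₗ[R] Hmod R c d :=
  (Submodule.mkQ _).comp <|
    (((LinearMap.mulRight R P).prodMap (LinearMap.mulRight R Q)).codRestrict (Zsub R c d)
      fun p => HmkPQ hP hQ p.1 p.2)

lemma annGenMap_apply {P Q : R} (hP : annI R c = Ideal.span {P})
    (hQ : annI R d = Ideal.span {Q}) (f g : R) :
    annGenMap hP hQ (f, g) = Hmk R c d (f * P) (g * Q) (HmkPQ hP hQ f g) := rfl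

lemma annGenMap_surjective_of_regular (hc : c * c' * c = c) (hd : d * d' * d = d) {P Q : R}
    (hP : annI R c = Ideal.span {P}) (hQ : annI R d = Ideal.span {Q}) :
    Function.Surjective (annGenMap hP hQ) := by
  intro x
  obtain ⟨⟨⟨f, g⟩, h⟩, rfl⟩ := Submodule.Quotient.mk_surjective _ x
  obtain ⟨r, hf, hg⟩ := exists_boundary_of_regular hc hd (mem_Zsub.1 h)
  rw [← mem_annI, hP, Ideal.mem_span_singleton'] at hf
  rw [← mem_annI, hQ, Ideal.mem_span_singleton'] at hg
  obtain ⟨s, hs⟩ := hf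
  obtain ⟨t, ht⟩ := hg
  refine ⟨(s, t), (Hmk_eq_Hmk_iff (HmkPQ hP hQ s t) h).2 ⟨-r, ?_, ?_⟩⟩
  · linear_combination -hs
  · linear_combination -ht

lemma ker_annGenMap_of_regular (hc : c * c' * c = c) (hd : d * d' * d = d) :
    LinearMap.ker (annGenMap (annI_eq_span_of_regular hc) (annI_eq_span_of_regular hd)) =
      Submodule.prod (Ideal.span {c, d}) (Ideal.span {c, d}) := by
  ext ⟨f, g⟩
  rw [LinearMap.mem_ker, annGenMap_apply, Hmk_eq_zero_iff, Submodule.mem_prod]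
  simp only [Ideal.mem_span_pair]
  constructor
  · rintro ⟨r, hf, hg⟩
    exact ⟨⟨c' * f, r, by linear_combination hf⟩, ⟨r, d' * g, by linear_combination hg⟩⟩
  · rintro ⟨⟨a, b, rfl⟩, ⟨a', b', rfl⟩⟩
    refine ⟨b * (1 - c * c') + a' * (1 - d * d'), ?_, ?_⟩
    · linear_combination a * hc - a' * hd
    · linear_combination b' * hd - b * hc

lemma exists_linearMap_bijective_of_regular (hc : c * c' * c = c) (hd : d * d' * d = d) :
    ∃ P Q : R, ∃ (hP : annI R c = Ideal.span {P}) (hQ : annI R d = Ideal.span {Q}),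
      ∃ φ : (R ⧸ Ideal.span {c, d}) × (R ⧸ Ideal.span {c, d}) →ₗ[R] Hmod R c d,
        (∀ f g : R,
          φ (Ideal.Quotient.mk (Ideal.span {c, d}) f, Ideal.Quotient.mk (Ideal.span {c, d}) g) =
            Hmk R c d (f * P) (g * Q) (HmkPQ hP hQ f g)) ∧
        Function.Bijective φ := by
  have hP := annI_eq_span_of_regular hc
  have hQ := annI_eq_span_of_regular hd
  have hker := ker_annGenMap_of_regular hc hd
  have hle₁ : Ideal.span {c, d} ≤
      LinearMap.ker ((annGenMap hP hQ).comp (LinearMap.inl R R R)) := fun a ha => by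
    rw [LinearMap.ker_comp, hker]
    exact ⟨ha, zero_mem _⟩
  have hle₂ : Ideal.span {c, d} ≤
      LinearMap.ker ((annGenMap hP hQ).comp (LinearMap.inr R R R)) := fun a ha => by
    rw [LinearMap.ker_comp, hker]
    exact ⟨zero_mem _, ha⟩
  let φ : (R ⧸ Ideal.span {c, d}) × (R ⧸ Ideal.span {c, d}) →ₗ[R] Hmod R c d :=
    (Submodule.liftQ _ _ hle₁).coprod (Submodule.liftQ _ _ hle₂)
  have hφ (f g : R) : φ (Ideal.Quotient.mk (Ideal.span {c, d}) f,
      Ideal.Quotient.mk (Ideal.span {c, d}) g) = annGenMap hP hQ (f, g) := by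
    change annGenMap hP hQ (f, 0) + annGenMap hP hQ (0, g) = _
    rw [← map_add]
    simp
  refine ⟨_, _, hP, hQ, φ, hφ, ?_, fun x => ?_⟩
  · rw [injective_iff_map_eq_zero]
    rintro ⟨x, y⟩ hxy
    obtain ⟨f, rfl⟩ := Ideal.Quotient.mk_surjective x
    obtain ⟨g, rfl⟩ := Ideal.Quotient.mk_surjective y
    rw [hφ, ← LinearMap.mem_ker, hker] at hxy
    exact Prod.ext (Ideal.Quotient.eq_zero_iff_mem.2 hxy.1) (Ideal.Quotient.eq_zero_iff_mem.2 hxy.2)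
  · obtain ⟨⟨f, g⟩, rfl⟩ := annGenMap_surjective_of_regular hc hd hP hQ x
    exact ⟨_, hφ f g⟩

end Homology

/-- A power of the Frobenius is the identity on `F₂[x, y]/(xˡ − 1, yᵐ − 1)` for odd `l`, `m`. -/
lemma BBRing.exists_pow_two_pow_eq_self {l m : ℕ} (hl : Odd l) (hm : Odd m) :
    ∃ k, 0 < k ∧ ∀ a : BBRing l m, a ^ 2 ^ k = a := by
  have hlm : Nat.Coprime 2 (l * m) := (Nat.coprime_two_left).2 (hl.mul hm)
  refine ⟨Nat.totient (l * m), Nat.totient_pos.2 (Nat.mul_pos hl.pos hm.pos), ?_⟩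
  set k := Nat.totient (l * m)
  have hdvd : l * m ∣ 2 ^ k - 1 :=
    (Nat.modEq_iff_dvd' Nat.one_le_two_pow).1 (Nat.ModEq.pow_totient hlm).symm
  have hpow {a : BBRing l m} {n : ℕ} (ha : a ^ n = 1) (hn : n ∣ l * m) : a ^ 2 ^ k = a := by
    obtain ⟨j, hj⟩ := hn.trans hdvd
    rw [← Nat.sub_add_cancel (Nat.one_le_two_pow (n := k)), hj, pow_succ, pow_mul, ha, one_pow,
      one_mul]
  let π : MvPolynomial (Fin 2) (ZMod 2) →+* BBRing l m := Ideal.Quotient.mk _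
  have hx : π (MvPolynomial.X 0) ^ l = 1 := by
    rw [← map_pow, ← map_one π]
    exact Ideal.Quotient.eq.2 (Ideal.subset_span (by simp))
  have hy : π (MvPolynomial.X 1) ^ m = 1 := by
    rw [← map_pow, ← map_one π]
    exact Ideal.Quotient.eq.2 (Ideal.subset_span (by simp))
  have hπ : π.comp (iterateFrobenius (MvPolynomial (Fin 2) (ZMod 2)) 2 k) = π := by
    refine MvPolynomial.ringHom_ext (fun r => ?_) fun i => ?_
    · rw [RingHom.comp_apply, iterateFrobenius_def, ← map_pow, ZMod.pow_card_pow]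
    · rw [RingHom.comp_apply, iterateFrobenius_def, map_pow]
      fin_cases i
      · exact hpow hx (dvd_mul_right l m)
      · exact hpow hy (dvd_mul_left m l)
  intro a
  obtain ⟨p, rfl⟩ := Ideal.Quotient.mk_surjective a
  have := RingHom.congr_fun hπ p
  rwa [RingHom.comp_apply, iterateFrobenius_def, map_pow] at this

lemma BBRing.exists_mul_mul_eq_self {l m : ℕ} (hl : Odd l) (hm : Odd m) (a : BBRing l m) :
    ∃ b, a * b * a = a := by
  obtain ⟨k, hk, h⟩ := BBRing.exists_pow_two_pow_eq_self hl hm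
  have h2 : 2 ≤ 2 ^ k := Nat.le_self_pow hk.ne' 2
  refine ⟨a ^ (2 ^ k - 2), ?_⟩
  rw [← pow_succ', ← pow_succ, show 2 ^ k - 2 + 1 + 1 = 2 ^ k by omega, h]

theorem stmt13 (l m : ℕ) (hl : Odd l) (hm : Odd m) (c d : BBRing l m) :
    (Hpureh (BBRing l m) c d ⊔ Hpurev (BBRing l m) c d = ⊤ ∧
     Hpureh (BBRing l m) c d ⊓ Hpurev (BBRing l m) c d = ⊥) ∧
    ∃ P Q : BBRing l m,
      ∃ (hP : annI (BBRing l m) c = Ideal.span {P})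
        (hQ : annI (BBRing l m) d = Ideal.span {Q}),
      ∃ φ : (BBRing l m ⧸ Ideal.span {c, d}) × (BBRing l m ⧸ Ideal.span {c, d})
          →ₗ[BBRing l m] Hmod (BBRing l m) c d,
        (∀ f g : BBRing l m,
          φ (Ideal.Quotient.mk (Ideal.span {c, d}) f,
             Ideal.Quotient.mk (Ideal.span {c, d}) g) =
            Hmk (BBRing l m) c d (f * P) (g * Q) (HmkPQ hP hQ f g)) ∧
        Function.Bijective φ := by
  obtain ⟨c', hc⟩ := BBRing.exists_mul_mul_eq_self hl hm c
  obtain ⟨d', hd⟩ := BBRing.exists_mul_mul_eq_self hl hm d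
  exact ⟨⟨Hpureh_sup_Hpurev_of_regular hc hd, Hpureh_inf_Hpurev_of_regular hc⟩,
    exists_linearMap_bijective_of_regular hc hd⟩
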